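/- arXiv:1311.1961 — 4 statements merged into one kernel-verified Lean document; each statement's English description precedes it below -/
import Mathlib

section
/- Let n ≥ 2 and equip ℝⁿ (i.e. Fin n → ℝ) with the Minkowski bilinear form B(u,v) = −u 0 · v 0 + ∑_{i=1}^{n−1} u i · v i (a nondegenerate symmetric bilinear form of index 1). If u, v ∈ ℝⁿ are light-like, i.e. B(u,u) = 0 and B(v,v) = 0, then B(u,v) = 0 if and only if u and v are linearly dependent over ℝ. -/
/-- The Minkowski bilinear form on `ℝⁿ = Fin (n+2) → ℝ` (index 1):
`B(u,v) = -u₀v₀ + Σ_{i=1}^{n+1} uᵢvᵢ`. -/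
noncomputable def minkB (n : ℕ) (u v : Fin (n + 2) → ℝ) : ℝ :=
  -(u 0 * v 0) + ∑ i : Fin (n + 1), u i.succ * v i.succ

/-!
If `B` is anisotropic on the kernel of a linear functional `τ`, then for isotropic orthogonal
`u`, `v` the vector `τ v • u - τ u • v` is isotropic and lies in that kernel, so it vanishes.
For the Minkowski form, `τ` is the time coordinate. Conversely, pairing a relation
`s • u + t • v = 0` with `v` and with `u` shows `s * B u v = 0` and `t * B u v = 0`.
-/

open LinearMap (BilinForm)

section IsotropicPair

variable {R M : Type*} [CommRing R] [AddCommGroup M] [Module R M] {B : BilinForm R M} {u v : M}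

theorem linearIndependent_pair_of_isotropic_of_apply_ne_zero [IsDomain R]
    (hu : B u u = 0) (hv : B v v = 0) (huv : B u v ≠ 0) : LinearIndependent R ![u, v] := by
  refine LinearIndependent.pair_iff.mpr fun s t hst => ⟨?_, ?_⟩
  · have pair_v : s * B u v = 0 := by simpa [hv] using congrArg (B · v) hst
    exact (mul_eq_zero.mp pair_v).resolve_right huv
  · have pair_u : t * B u v = 0 := by simpa [hu] using congrArg (B u) hst
    exact (mul_eq_zero.mp pair_u).resolve_right huv

theorem smul_eq_smul_of_isotropic_of_apply_eq_zero (hB : B.IsRefl) {τ : M →ₗ[R] R}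
    (hτ : ∀ w, τ w = 0 → B w w = 0 → w = 0)
    (hu : B u u = 0) (hv : B v v = 0) (huv : B u v = 0) : τ v • u = τ u • v := by
  have hvu : B v u = 0 := hB u v huv
  refine sub_eq_zero.mp (hτ _ ?_ ?_)
  · simp [mul_comm]
  · simp [hu, hv, huv, hvu]

theorem not_linearIndependent_pair_of_isotropic_of_apply_eq_zero [Nontrivial R] (hB : B.IsRefl)
    {τ : M →ₗ[R] R} (hτ : ∀ w, τ w = 0 → B w w = 0 → w = 0)
    (hu : B u u = 0) (hv : B v v = 0) (huv : B u v = 0) : ¬ LinearIndependent R ![u, v] := by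
  intro hli
  have relation : τ v • u + (-τ u) • v = 0 := by
    rw [smul_eq_smul_of_isotropic_of_apply_eq_zero hB hτ hu hv huv, neg_smul, add_neg_cancel]
  have τu : τ u = 0 := neg_eq_zero.mp (LinearIndependent.pair_iff.mp hli _ _ relation).2
  exact hli.ne_zero 0 (hτ u τu hu)

theorem lightlike_orthogonal_iff_linearDependent_general [IsDomain R] (hB : B.IsRefl)
    {τ : M →ₗ[R] R} (hτ : ∀ w, τ w = 0 → B w w = 0 → w = 0) (hu : B u u = 0) (hv : B v v = 0) :
    B u v = 0 ↔ ¬ LinearIndependent R ![u, v] :=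
  ⟨not_linearIndependent_pair_of_isotropic_of_apply_eq_zero hB hτ hu hv,
    not_imp_comm.mp (linearIndependent_pair_of_isotropic_of_apply_ne_zero hu hv)⟩

end IsotropicPair

section Minkowski

variable {R : Type*} [CommRing R] {n : ℕ}

variable (R n) in
/-- The Minkowski form on `Rⁿ⁺¹` as a bundled bilinear form, with coordinate `0` as time and
signature `(-, +, …, +)`; `minkB n` is the case of `ℝⁿ⁺²`. -/
def minkowskiForm : BilinForm R (Fin (n + 1) → R) :=
  -BilinForm.linMulLin (.proj 0) (.proj 0) +
    ∑ i : Fin n, BilinForm.linMulLin (.proj i.succ) (.proj i.succ)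

theorem minkowskiForm_apply (u v : Fin (n + 1) → R) :
    minkowskiForm R n u v = -(u 0 * v 0) + ∑ i : Fin n, u i.succ * v i.succ := by
  simp [minkowskiForm]

theorem isSymm_minkowskiForm : (minkowskiForm R n).IsSymm :=
  ⟨fun u v => by simp [minkowskiForm_apply, mul_comm]⟩

theorem eq_zero_of_minkowskiForm_self_eq_zero [LinearOrder R] [IsStrictOrderedRing R]
    (w : Fin (n + 1) → R) (time : w 0 = 0) (isotropic : minkowskiForm R n w w = 0) : w = 0 := by
  have sum_sq : ∑ i : Fin n, w i.succ * w i.succ = 0 := by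
    simpa [minkowskiForm_apply, time] using isotropic
  have space (i : Fin n) : w i.succ = 0 :=
    mul_self_eq_zero.mp <| (Finset.sum_eq_zero_iff_of_nonneg fun _ _ => mul_self_nonneg _).mp
      sum_sq i (Finset.mem_univ i)
  exact funext (Fin.cases time space)

end Minkowski

/-- Two light-like vectors in Minkowski space are orthogonal if and only if
they are linearly dependent. -/
theorem lightlike_orthogonal_iff_linearDependent
    (n : ℕ) (u v : Fin (n + 2) → ℝ)
    (hu : minkB n u u = 0) (hv : minkB n v v = 0) :
    minkB n u v = 0 ↔ ¬ LinearIndependent ℝ ![u, v] := by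
  simp only [minkB, ← minkowskiForm_apply] at hu hv ⊢
  exact lightlike_orthogonal_iff_linearDependent_general isSymm_minkowskiForm.isRefl
    (τ := .proj 0) eq_zero_of_minkowskiForm_self_eq_zero hu hv
end

section
/- Existence of null coordinates on a Lorentzian surface: let U ⊆ ℝ² be open and let g : U → Matrix (Fin 2) (Fin 2) ℝ be a smooth map such that g(p) is symmetric and det g(p) < 0 for every p ∈ U (so g is a smooth Lorentzian metric on U). Then for every p ∈ U there exist an open set V ⊆ ℝ², a point q ∈ V, a smooth injective map φ : V → U with φ(q) = p whose total derivative Dφ(w) is invertible at every w ∈ V, and a smooth function μ : V → ℝ with μ(w) > 0 for all w ∈ V, such that for all w ∈ V the pulled-back metric satisfies (Dφ(w))ᵀ · g(φ(w)) · Dφ(w) = [[0, −μ(w)], [−μ(w), 0]]; i.e. in the new coordinates the metric has the form −μ·(ds⊗dt + dt⊗ds). -/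
/-- The total derivative of a map `φ : ℝ² → ℝ²` at `w`, viewed as a 2×2 matrix. -/
noncomputable def Dmat (φ : (Fin 2 → ℝ) → (Fin 2 → ℝ)) (w : Fin 2 → ℝ) :
    Matrix (Fin 2) (Fin 2) ℝ :=
  Matrix.of fun i j => fderiv ℝ φ w (Pi.single j 1) i

/-! The two null lines of `g` are spanned by vector fields that are algebraic in the entries of `g`
and `√(-det g)`. A nonvanishing planar vector field has a local first integral with prescribed
differential at `p`: where the field has nonzero horizontal component its trajectories are the
graphs of solutions of `y' = v(x, y)`, and the initial height, recovered by inverting the flow, is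
constant along them. If the `i`-th coordinate is a first integral of the *other* null field, the
coordinate axes are null, so the pulled-back metric has zero diagonal. The frame at `p` can be
prescribed, which makes the off-diagonal entry negative there and hence nearby.

The flow is smooth because the difference of two solutions satisfies a linear equation: it is the
initial difference times the exponential of an integral of a mean value of `∂v/∂y`, and the
resulting formula for the derivative in the initial height allows a bootstrap. -/

open Set Filter Topology Matrix
open scoped NNReal

section ParametricPrimitive

theorem contDiff_succ_uncurry {𝕜 E₁ E₂ F : Type*} [NontriviallyNormedField 𝕜]
    [IsRCLikeNormedField 𝕜] [NormedAddCommGroup E₁] [NormedSpace 𝕜 E₁]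
    [NormedAddCommGroup E₂] [NormedSpace 𝕜 E₂] [NormedAddCommGroup F] [NormedSpace 𝕜 F] {n : ℕ∞}
    {f : E₁ → E₂ → F} {f₁ : E₁ → E₂ → E₁ →L[𝕜] F} {f₂ : E₁ → E₂ → E₂ →L[𝕜] F}
    (df₁ : ∀ x y, HasFDerivAt (f · y) (f₁ x y) x) (df₂ : ∀ x y, HasFDerivAt (f x) (f₂ x y) y)
    (cf₁ : ContDiff 𝕜 n ↿f₁) (cf₂ : ContDiff 𝕜 n ↿f₂) : ContDiff 𝕜 (n + 1) ↿f := by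
  have hf : ∀ z, HasFDerivAt ↿f ((↿f₁ z).coprod (↿f₂ z)) z := fun z =>
    (hasStrictFDerivAt_uncurry_coprod (.of_forall fun v => df₁ v.1 v.2)
      (.of_forall fun v => df₂ v.1 v.2) cf₁.continuous.continuousAt
      cf₂.continuous.continuousAt).hasFDerivAt
  refine contDiff_succ_iff_fderiv.2 ⟨fun z => (hf z).differentiableAt, by simp, ?_⟩
  rw [funext fun z => (hf z).fderiv]
  exact (ContinuousLinearMap.coprodEquivL 𝕜).contDiff.comp (cf₁.prodMk cf₂)

theorem contDiff_succ_uncurry_of_hasDerivAt {𝕜 F : Type*} [NontriviallyNormedField 𝕜]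
    [IsRCLikeNormedField 𝕜] [NormedAddCommGroup F] [NormedSpace 𝕜 F] {n : ℕ∞}
    {f f₁ f₂ : 𝕜 → 𝕜 → F} (df₁ : ∀ x y, HasDerivAt (f · y) (f₁ x y) x)
    (df₂ : ∀ x y, HasDerivAt (f x) (f₂ x y) y) (cf₁ : ContDiff 𝕜 n ↿f₁)
    (cf₂ : ContDiff 𝕜 n ↿f₂) : ContDiff 𝕜 (n + 1) ↿f :=
  contDiff_succ_uncurry (fun x y => (df₁ x y).hasFDerivAt) (fun x y => (df₂ x y).hasFDerivAt)
    ((ContinuousLinearMap.toSpanSingletonCLE (𝕜 := 𝕜) (E := F)).contDiff.comp cf₁)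
    ((ContinuousLinearMap.toSpanSingletonCLE (𝕜 := 𝕜) (E := F)).contDiff.comp cf₂)

variable {E : Type*} [NormedAddCommGroup E] [NormedSpace ℝ E]

theorem contDiff_uncurry_deriv {m n : WithTop ℕ∞} {F : ℝ → ℝ → E} (hF : ContDiff ℝ n ↿F)
    (hmn : m + 1 ≤ n) : ContDiff ℝ m ↿fun s => deriv (F s) :=
  have hF₁ : ContDiff ℝ n ↿fun z : ℝ × ℝ => F z.1 :=
    hF.comp ((contDiff_fst.comp contDiff_fst).prodMk contDiff_snd)
  (hF₁.fderiv contDiff_snd hmn).clm_apply contDiff_const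

theorem hasDerivAt_intervalIntegral_of_continuous {F F' : ℝ → ℝ → E} (hF : Continuous ↿F)
    (hF' : Continuous ↿F') (h : ∀ s k, HasDerivAt (F s) (F' s k) k) (a b k : ℝ) :
    HasDerivAt (fun k => ∫ s in a..b, F s k) (∫ s in a..b, F' s k) k := by
  have hslice : ∀ {G : ℝ → ℝ → E}, Continuous ↿G → ∀ k, Continuous fun s => G s k :=
    fun hG k => hG.comp (Continuous.prodMk_left k)
  obtain ⟨C, hC⟩ := (isCompact_uIcc.prod (isCompact_closedBall k 1)).exists_bound_of_continuousOn
    (s := uIcc a b ×ˢ Metric.closedBall k 1) hF'.continuousOn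
  exact (intervalIntegral.hasDerivAt_integral_of_dominated_loc_of_deriv_le
    (F := fun k s => F s k) (F' := fun k s => F' s k) (bound := fun _ => C)
    (Metric.ball_mem_nhds k one_pos) (.of_forall fun k => (hslice hF k).aestronglyMeasurable)
    ((hslice hF k).intervalIntegrable a b) (hslice hF' k).aestronglyMeasurable
    (.of_forall fun s hs k' hk' =>
      hC (s, k') ⟨uIoc_subset_uIcc hs, Metric.ball_subset_closedBall hk'⟩)
    intervalIntegrable_const (.of_forall fun s _ k' _ => h s k')).2

theorem contDiff_intervalIntegral_nat [CompleteSpace E] (a : ℝ) {n : ℕ} {F : ℝ → ℝ → E}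
    (hF : ContDiff ℝ n ↿F) : ContDiff ℝ n ↿fun x k => ∫ s in a..x, F s k := by
  induction n generalizing F with
  | zero =>
    refine contDiff_zero.2 (intervalIntegral.continuous_parametric_intervalIntegral_of_continuous
      (f := fun z : ℝ × ℝ => fun s => F s z.2) ?_ continuous_fst)
    exact hF.continuous.comp (by fun_prop : Continuous fun w : (ℝ × ℝ) × ℝ => (w.2, w.1.2))
  | succ n ih =>
    have hF' : ContDiff ℝ n ↿fun s => deriv (F s) := contDiff_uncurry_deriv hF (by norm_cast)
    have hderiv : ∀ s k, HasDerivAt (F s) (deriv (F s) k) k := fun s k =>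
      ((hF.comp (contDiff_prodMk_right s)).differentiable (by simp) k).hasDerivAt
    have hcont : ∀ k, Continuous fun s => F s k := fun k =>
      hF.continuous.comp (Continuous.prodMk_left k)
    exact_mod_cast contDiff_succ_uncurry_of_hasDerivAt (n := n)
      (fun x k => ((hcont k).integral_hasStrictDerivAt a x).hasDerivAt)
      (hasDerivAt_intervalIntegral_of_continuous hF.continuous hF'.continuous hderiv a)
      (hF.of_le (by norm_cast; simp)) (ih hF')

theorem contDiff_intervalIntegral [CompleteSpace E] (a : ℝ) {n : ℕ∞} {F : ℝ → ℝ → E}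
    (hF : ContDiff ℝ n ↿F) : ContDiff ℝ n ↿fun x k => ∫ s in a..x, F s k :=
  contDiff_iff_forall_nat_le.2 fun _ hm =>
    contDiff_intervalIntegral_nat a (hF.of_le (by exact_mod_cast hm))

end ParametricPrimitive

section GlobalSolutions

variable {E : Type*} [NormedAddCommGroup E] [NormedSpace ℝ E] {v : ℝ → E → E} {K L : ℝ≥0}

theorem exists_isIntegralCurveOn_Ioo [CompleteSpace E] (hv : ∀ y, Continuous fun t => v t y)
    (hL : ∀ t y, ‖v t y‖ ≤ L) (hK : ∀ t, LipschitzWith K (v t)) (t₀ : ℝ) (y₀ : E) (r : ℝ≥0) :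
    ∃ γ : ℝ → E, γ t₀ = y₀ ∧ IsIntegralCurveOn γ v (Ioo (t₀ - r) (t₀ + r)) := by
  have hPL : IsPicardLindelof v (tmin := t₀ - r) (tmax := t₀ + r)
      ⟨t₀, by simp⟩ y₀ (L * r) 0 L K :=
    { lipschitzOnWith := fun t _ => (hK t).lipschitzOnWith
      continuousOn := fun y _ => (hv y).continuousOn
      norm_le := fun t _ y _ => hL t y
      mul_max_le := by simp }
  obtain ⟨γ, hγ₀, hγ⟩ := hPL.exists_eq_forall_mem_Icc_hasDerivWithinAt₀
  exact ⟨γ, hγ₀, fun t ht => (hγ t (Ioo_subset_Icc_self ht)).mono Ioo_subset_Icc_self⟩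

theorem exists_isIntegralCurve_of_forall_Ioo (hK : ∀ t, LipschitzWith K (v t)) {t₀ : ℝ} {y₀ : E}
    (h : ∀ r > 0, ∃ γ : ℝ → E, γ t₀ = y₀ ∧ IsIntegralCurveOn γ v (Ioo (t₀ - r) (t₀ + r))) :
    ∃ γ : ℝ → E, γ t₀ = y₀ ∧ IsIntegralCurve γ v := by
  choose! γ hγ₀ hγ using h
  have hderiv : ∀ r > 0, ∀ t ∈ Ioo (t₀ - r) (t₀ + r), HasDerivAt (γ r) (v t (γ r t)) t :=
    fun r hr t ht => (hγ r hr t ht).hasDerivAt (isOpen_Ioo.mem_nhds ht)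
  have hagree : ∀ r > 0, ∀ R ≥ r, EqOn (γ r) (γ R) (Ioo (t₀ - r) (t₀ + r)) := fun r hr R hR =>
    ODE_solution_unique_of_mem_Ioo (s := fun _ => univ) (t₀ := t₀)
      (fun t _ => (hK t).lipschitzOnWith) (by constructor <;> linarith)
      (fun t ht => ⟨hderiv r hr t ht, trivial⟩)
      (fun t ht => ⟨hderiv R (by linarith) t
        (Ioo_subset_Ioo (by linarith) (by linarith) ht), trivial⟩)
      (by rw [hγ₀ r hr, hγ₀ R (by linarith)])
  refine ⟨fun t => γ (|t - t₀| + 1) t, by simp [hγ₀], fun t => ?_⟩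
  have hmem : t ∈ Ioo (t₀ - (|t - t₀| + 1)) (t₀ + (|t - t₀| + 1)) := by
    constructor <;> cases abs_cases (t - t₀) <;> linarith
  refine (hderiv _ (by positivity) t hmem).congr_of_eventuallyEq ?_
  filter_upwards [isOpen_Ioo.mem_nhds hmem] with s hs
  have hs' : s ∈ Ioo (t₀ - (|s - t₀| + 1)) (t₀ + (|s - t₀| + 1)) := by
    constructor <;> cases abs_cases (s - t₀) <;> linarith
  rcases le_total |s - t₀| |t - t₀| with hst | hst
  · exact hagree _ (by positivity) _ (by linarith) hs'
  · exact (hagree _ (by positivity) _ (by linarith) hs).symm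

theorem exists_isIntegralCurve_of_bounded [CompleteSpace E]
    (hv : ∀ y, Continuous fun t => v t y) (hL : ∀ t y, ‖v t y‖ ≤ L)
    (hK : ∀ t, LipschitzWith K (v t)) (t₀ : ℝ) (y₀ : E) :
    ∃ γ : ℝ → E, γ t₀ = y₀ ∧ IsIntegralCurve γ v :=
  exists_isIntegralCurve_of_forall_Ioo hK fun r hr =>
    exists_isIntegralCurveOn_Ioo hv hL hK t₀ y₀ ⟨r, hr.le⟩

end GlobalSolutions

section MeanDeriv

/-- The mean value of `f'` on the segment from `y` to `z`. Unlike the difference quotient of `f`,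
it is jointly continuous across the diagonal. -/
noncomputable def meanDeriv (f : ℝ → ℝ) (y z : ℝ) : ℝ :=
  ∫ θ in (0 : ℝ)..1, deriv f (y + θ * (z - y))

theorem meanDeriv_self (f : ℝ → ℝ) (y : ℝ) : meanDeriv f y y = deriv f y := by
  simp [meanDeriv]

theorem sub_mul_meanDeriv {f : ℝ → ℝ} (hf : ContDiff ℝ 1 f) (y z : ℝ) :
    (z - y) * meanDeriv f y z = f z - f y := by
  have hf' : Continuous fun θ : ℝ => deriv f (y + θ • (z - y)) :=
    (hf.continuous_deriv le_rfl).comp (by fun_prop)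
  simpa [meanDeriv] using intervalIntegral.integral_unitInterval_deriv_eq_sub
    hf'.continuousOn fun θ _ => (hf.differentiable one_ne_zero (y + θ • (z - y))).hasDerivAt

theorem abs_meanDeriv_le {f : ℝ → ℝ} {K : ℝ≥0} (hf : LipschitzWith K f) (y z : ℝ) :
    |meanDeriv f y z| ≤ K := by
  simpa [meanDeriv] using intervalIntegral.norm_integral_le_of_norm_le_const (a := 0) (b := 1)
    (f := fun θ => deriv f (y + θ * (z - y))) fun _ _ => norm_deriv_le_of_lipschitz hf

theorem continuous_meanDeriv {v : ℝ → ℝ → ℝ} (hv : ContDiff ℝ 1 ↿v) :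
    Continuous ↿fun x => meanDeriv (v x) := by
  have hv' : Continuous ↿fun x => deriv (v x) :=
    (contDiff_uncurry_deriv hv (m := 0) (by simp)).continuous
  refine intervalIntegral.continuous_parametric_intervalIntegral_of_continuous'
    (f := fun (w : ℝ × ℝ × ℝ) θ => deriv (v w.1) (w.2.1 + θ * (w.2.2 - w.2.1))) ?_ 0 1
  exact hv'.comp (by fun_prop :
    Continuous fun u : (ℝ × ℝ × ℝ) × ℝ => (u.1.1, u.1.2.1 + u.2 * (u.1.2.2 - u.1.2.1)))

end MeanDeriv

section Flow

theorem eq_exp_integral_smul_of_hasDerivAt {E : Type*} [NormedAddCommGroup E] [NormedSpace ℝ E]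
    {a : ℝ → ℝ} {w : ℝ → E} (ha : Continuous a) (hw : ∀ t, HasDerivAt w (a t • w t) t)
    (t₀ t : ℝ) : w t = Real.exp (∫ s in t₀..t, a s) • w t₀ := by
  let A : ℝ → ℝ := fun t => ∫ s in t₀..t, a s
  have hA : ∀ t, HasDerivAt A (a t) t := fun t => (ha.integral_hasStrictDerivAt t₀ t).hasDerivAt
  have hconst : ∀ t, HasDerivAt (fun t => Real.exp (-A t) • w t) 0 t := fun t =>
    ((hA t).neg.exp.smul (hw t)).congr_deriv (by module)
  have heq := is_const_of_deriv_eq_zero (fun t => (hconst t).differentiableAt)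
    (fun t => (hconst t).deriv) t t₀
  have hA₀ : A t₀ = 0 := intervalIntegral.integral_same
  calc w t = Real.exp (A t) • Real.exp (-A t) • w t := by rw [smul_smul, ← Real.exp_add]; simp
    _ = Real.exp (A t) • w t₀ := by rw [heq, hA₀]; simp

/-- `Y x y` is the value at time `x` of the solution of `γ' = v(·, γ)` that passes through `y` at
time `x₀`, for all times `x` and all initial values `y`. -/
structure IsFlowFrom {E : Type*} [NormedAddCommGroup E] [NormedSpace ℝ E] (x₀ : ℝ)
    (v Y : ℝ → E → E) : Prop where
  initial : ∀ y, Y x₀ y = y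
  isIntegralCurve : ∀ y, IsIntegralCurve (Y · y) v

namespace IsFlowFrom

variable {v Y : ℝ → ℝ → ℝ} {x₀ : ℝ} {K : ℝ≥0}

theorem continuous_left (hY : IsFlowFrom x₀ v Y) (y : ℝ) : Continuous (Y · y) :=
  (hY.isIntegralCurve y).continuous

theorem sub_eq (hY : IsFlowFrom x₀ v Y) (hv : ContDiff ℝ 1 ↿v) (x y z : ℝ) :
    Y x z - Y x y = Real.exp (∫ s in x₀..x, meanDeriv (v s) (Y s y) (Y s z)) * (z - y) := by
  have hcont : Continuous fun s => meanDeriv (v s) (Y s y) (Y s z) :=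
    (continuous_meanDeriv hv).comp
      (continuous_id.prodMk ((hY.continuous_left y).prodMk (hY.continuous_left z)))
  have hderiv : ∀ s, HasDerivAt (fun s => Y s z - Y s y)
      (meanDeriv (v s) (Y s y) (Y s z) • (Y s z - Y s y)) s := fun s => by
    have hvs : ContDiff ℝ 1 (v s) := hv.comp (contDiff_prodMk_right s)
    rw [smul_eq_mul, mul_comm, sub_mul_meanDeriv hvs]
    exact (hY.isIntegralCurve z s).sub (hY.isIntegralCurve y s)
  simpa [hY.initial] using eq_exp_integral_smul_of_hasDerivAt hcont hderiv x₀ x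

theorem abs_sub_le (hY : IsFlowFrom x₀ v Y) (hv : ContDiff ℝ 1 ↿v)
    (hK : ∀ x, LipschitzWith K (v x)) (x y z : ℝ) :
    |Y x z - Y x y| ≤ Real.exp (K * |x - x₀|) * |z - y| := by
  rw [hY.sub_eq hv, abs_mul, Real.abs_exp]
  gcongr
  exact (le_abs_self _).trans (intervalIntegral.norm_integral_le_of_norm_le_const
    (f := fun s => meanDeriv (v s) (Y s y) (Y s z)) fun s _ => abs_meanDeriv_le (hK s) _ _)

theorem continuous (hY : IsFlowFrom x₀ v Y) (hv : ContDiff ℝ 1 ↿v)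
    (hK : ∀ x, LipschitzWith K (v x)) : Continuous ↿Y := by
  refine continuous_iff_continuousAt.2 fun ⟨x, y⟩ => ?_
  have hdiff : Tendsto (fun z : ℝ × ℝ => Y z.1 z.2 - Y z.1 y) (𝓝 (x, y)) (𝓝 0) := by
    have hbound : Continuous fun z : ℝ × ℝ => Real.exp (K * |z.1 - x₀|) * |z.2 - y| := by fun_prop
    exact squeeze_zero_norm (fun z => hY.abs_sub_le hv hK z.1 y z.2)
      (by simpa using hbound.tendsto (x, y))
  have hslice : Tendsto (fun z : ℝ × ℝ => Y z.1 y) (𝓝 (x, y)) (𝓝 (Y x y)) :=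
    ((hY.continuous_left y).comp continuous_fst).tendsto (x, y)
  simpa [ContinuousAt, Function.HasUncurry.uncurry] using hdiff.add hslice

theorem hasDerivAt (hY : IsFlowFrom x₀ v Y) (hv : ContDiff ℝ 1 ↿v)
    (hK : ∀ x, LipschitzWith K (v x)) (x y : ℝ) :
    HasDerivAt (Y x) (Real.exp (∫ s in x₀..x, deriv (v s) (Y s y))) y := by
  have hcont : Continuous fun z => Real.exp (∫ s in x₀..x, meanDeriv (v s) (Y s y) (Y s z)) := by
    refine Real.continuous_exp.comp
      (intervalIntegral.continuous_parametric_intervalIntegral_of_continuous' ?_ x₀ x)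
    have hYy : Continuous fun u : ℝ × ℝ => Y u.2 y := (hY.continuous_left y).comp continuous_snd
    exact (continuous_meanDeriv hv).comp
      (continuous_snd.prodMk (hYy.prodMk ((hY.continuous hv hK).comp continuous_swap)))
  have hlim := (hcont.tendsto y).mono_left (nhdsWithin_le_nhds (s := {y}ᶜ))
  simp only [meanDeriv_self] at hlim
  refine hasDerivAt_iff_tendsto_slope.2 (hlim.congr' ?_)
  filter_upwards [self_mem_nhdsWithin] with z hz
  rw [slope_def_field, hY.sub_eq hv, mul_div_cancel_right₀ _ (sub_ne_zero.2 hz)]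

theorem contDiff (hY : IsFlowFrom x₀ v Y) {n : ℕ∞} (hv : ContDiff ℝ (n + 1) ↿v)
    (hK : ∀ x, LipschitzWith K (v x)) : ContDiff ℝ (n + 1) ↿Y := by
  have hv₁ : ContDiff ℝ 1 ↿v := hv.of_le (by simp)
  suffices h : ∀ m : ℕ, (m : ℕ∞) ≤ n + 1 → ContDiff ℝ m ↿Y from
    contDiff_iff_forall_nat_le (n := n + 1).2 h
  intro m
  induction m with
  | zero => exact fun _ => contDiff_zero.2 (hY.continuous hv₁ hK)
  | succ m ih =>
    intro hm
    push_cast at hm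
    have hmn : (m : WithTop ℕ∞) ≤ n := by
      exact_mod_cast (ENat.add_le_add_iff_right ENat.one_ne_top).1 hm
    have hYm : ContDiff ℝ m fun z : ℝ × ℝ => (z.1, Y z.1 z.2) :=
      contDiff_fst.prodMk (ih (le_self_add.trans hm))
    have hleft : ContDiff ℝ m ↿fun x y => v x (Y x y) :=
      (hv.of_le (hmn.trans le_self_add)).comp hYm
    have hderiv : ContDiff ℝ m ↿fun x y => deriv (v x) (Y x y) :=
      ((contDiff_uncurry_deriv hv le_rfl).of_le hmn).comp hYm
    have hright : ContDiff ℝ m ↿fun x y => Real.exp (∫ s in x₀..x, deriv (v s) (Y s y)) :=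
      Real.contDiff_exp.comp (contDiff_intervalIntegral x₀ (n := m) hderiv)
    exact_mod_cast contDiff_succ_uncurry_of_hasDerivAt (n := m)
      (fun x y => hY.isIntegralCurve y x) (hY.hasDerivAt hv₁ hK) hleft hright

end IsFlowFrom

theorem exists_isFlowFrom_contDiff {v : ℝ → ℝ → ℝ} {n : ℕ∞} (hv : ContDiff ℝ (n + 1) ↿v)
    (hsupp : HasCompactSupport ↿v) (x₀ : ℝ) : ∃ Y, IsFlowFrom x₀ v Y ∧ ContDiff ℝ (n + 1) ↿Y := by
  obtain ⟨L, hL⟩ := hsupp.exists_bound_of_continuous hv.continuous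
  obtain ⟨K, hK⟩ := hv.lipschitzWith_of_hasCompactSupport hsupp (by simp)
  have hKx : ∀ x, LipschitzWith K (v x) := fun x =>
    mul_one K ▸ hK.comp (LipschitzWith.prodMk_left x)
  have hLx : ∀ x y, ‖v x y‖ ≤ L.toNNReal := fun x y => (hL (x, y)).trans (Real.le_coe_toNNReal L)
  choose Y hY₀ hY using fun y => exists_isIntegralCurve_of_bounded
    (fun y => hv.continuous.comp (Continuous.prodMk_left y)) hLx hKx x₀ y
  have hflow : IsFlowFrom x₀ v fun x y => Y y x := ⟨hY₀, hY⟩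
  exact ⟨_, hflow, hflow.contDiff hv hKx⟩

end Flow

section LocalInverse

theorem exists_contDiff_hasCompactSupport_eventuallyEq {E F : Type*} [NormedAddCommGroup E]
    [NormedSpace ℝ E] [FiniteDimensional ℝ E] [NormedAddCommGroup F] [NormedSpace ℝ F] {n : ℕ∞}
    {f : E → F} {p : E} (hf : ∀ᶠ z in 𝓝 p, ContDiffAt ℝ n f z) :
    ∃ g : E → F, ContDiff ℝ n g ∧ HasCompactSupport g ∧ g =ᶠ[𝓝 p] f := by
  obtain ⟨ε, hε, hball⟩ := Metric.eventually_nhds_iff_ball.1 hf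
  let χ : ContDiffBump p := ⟨ε / 3, ε / 2, by positivity, by linarith⟩
  refine ⟨fun z => χ z • f z, contDiff_iff_contDiffAt.2 fun z => ?_,
    χ.hasCompactSupport.smul_right, ?_⟩
  · by_cases hz : z ∈ Metric.ball p ε
    · exact χ.contDiffAt.smul (hball z hz)
    · have hzχ : z ∉ tsupport χ := fun h =>
        hz (Metric.closedBall_subset_ball (half_lt_self hε) (χ.tsupport_eq ▸ h))
      have hzero : (fun w => χ w • f w) =ᶠ[𝓝 z] fun _ => 0 := by
        filter_upwards [notMem_tsupport_iff_eventuallyEq.1 hzχ] with w hw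
        simp [hw]
      exact contDiffAt_const.congr_of_eventuallyEq hzero
  · filter_upwards [χ.eventuallyEq_one] with z hz
    simp [hz]

theorem exists_openPartialHomeomorph_contDiffOn_symm {𝕜 E F : Type*} [RCLike 𝕜]
    [NormedAddCommGroup E] [NormedSpace 𝕜 E] [CompleteSpace E] [NormedAddCommGroup F]
    [NormedSpace 𝕜 F] {n : WithTop ℕ∞} (hn : n ≠ 0) {f : E → F} {f' : E ≃L[𝕜] F} {s : Set E}
    {p : E} (hs : s ∈ 𝓝 p) (hf : ∀ z ∈ s, ContDiffAt 𝕜 n f z)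
    (hf' : HasFDerivAt f (f' : E →L[𝕜] F) p) :
    ∃ Φ : OpenPartialHomeomorph E F, ⇑Φ = f ∧ p ∈ Φ.source ∧ Φ.source ⊆ s ∧
      ContDiffOn 𝕜 n Φ.symm Φ.target := by
  have hfp := hf p (mem_of_mem_nhds hs)
  let t : Set E := {z | fderiv 𝕜 f z ∈ range ((↑) : (E ≃L[𝕜] F) → E →L[𝕜] F)}
  have ht : t ∈ 𝓝 p :=
    (hfp.continuousAt_fderiv hn).eventually_mem (hf'.fderiv ▸ f'.nhds)
  let Φ₀ := hfp.toOpenPartialHomeomorph f hf' hn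
  let Φ := Φ₀.restr (s ∩ t)
  have hΦ : Φ.source ⊆ s ∩ t := fun z hz => interior_subset (Φ₀.restr_source _ ▸ hz).2
  refine ⟨Φ, rfl, ?_, fun z hz => (hΦ hz).1, fun w hw => ?_⟩
  · rw [Φ₀.restr_source]
    exact ⟨hfp.mem_toOpenPartialHomeomorph_source hf' hn,
      mem_interior_iff_mem_nhds.2 (inter_mem hs ht)⟩
  · obtain ⟨hz, e, he⟩ := hΦ (Φ.map_target hw)
    have hderiv : HasFDerivAt f (e : E →L[𝕜] F) (Φ.symm w) :=
      he ▸ ((hf _ hz).differentiableAt hn).hasFDerivAt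
    exact (Φ.contDiffAt_symm hw hderiv (hf _ hz)).contDiffWithinAt

end LocalInverse

section FirstIntegral

theorem fderiv_apply_eq_of_hasDerivAt_comp {𝕜 E F : Type*} [NontriviallyNormedField 𝕜]
    [NormedAddCommGroup E] [NormedSpace 𝕜 E] [NormedAddCommGroup F] [NormedSpace 𝕜 F]
    {f : E → F} {c : 𝕜 → E} {c' : E} {d : F} {t : 𝕜} (hf : DifferentiableAt 𝕜 f (c t))
    (hc : HasDerivAt c c' t) (hfc : HasDerivAt (f ∘ c) d t) : fderiv 𝕜 f (c t) c' = d :=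
  (hf.hasFDerivAt.comp_hasDerivAt t hc).unique hfc

theorem IsFlowFrom.exists_chart {n : ℕ∞} {v Y : ℝ → ℝ → ℝ} {p : ℝ × ℝ}
    (hY : IsFlowFrom p.1 v Y) (hYn : ContDiff ℝ (n + 1) ↿Y) :
    ∃ Φ : OpenPartialHomeomorph (ℝ × ℝ) (ℝ × ℝ), (∀ x y, Φ (x, y) = (x, Y x y)) ∧
      p ∈ Φ.source ∧ ContDiffOn ℝ (n + 1) Φ.symm Φ.target := by
  let Ψ : ℝ × ℝ → ℝ × ℝ := fun z => (z.1, Y z.1 z.2)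
  have hΨ : ContDiff ℝ (n + 1) Ψ := contDiff_fst.prodMk hYn
  have hdiff : DifferentiableAt ℝ Ψ p := hΨ.differentiable (by simp) p
  have hΨ_left : fderiv ℝ Ψ p (1, 0) = (1, v p.1 p.2) :=
    fderiv_apply_eq_of_hasDerivAt_comp (c := fun t => (t, p.2)) hdiff
      ((hasDerivAt_id _).prodMk (hasDerivAt_const _ _)) (by
        simpa [Function.comp_def, Ψ, hY.initial] using
          (hasDerivAt_id p.1).prodMk (hY.isIntegralCurve p.2 p.1))
  have hΨ_right : fderiv ℝ Ψ p (0, 1) = (0, 1) :=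
    fderiv_apply_eq_of_hasDerivAt_comp (c := fun t => (p.1, t)) hdiff
      ((hasDerivAt_const _ _).prodMk (hasDerivAt_id _)) (by
        simpa [Function.comp_def, Ψ, hY.initial] using
          (hasDerivAt_const p.2 p.1).prodMk (hasDerivAt_id p.2))
  let e : (ℝ × ℝ) ≃L[ℝ] (ℝ × ℝ) := (ContinuousLinearEquiv.refl ℝ ℝ).skewProd
    (ContinuousLinearEquiv.refl ℝ ℝ) (ContinuousLinearMap.toSpanSingleton ℝ (v p.1 p.2))
  have hΨ' : HasFDerivAt Ψ (e : ℝ × ℝ →L[ℝ] ℝ × ℝ) p :=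
    hdiff.hasFDerivAt.congr_fderiv (by ext <;> simp [e, hΨ_left, hΨ_right])
  obtain ⟨Φ, hΦ, hp, -, hsymm⟩ := exists_openPartialHomeomorph_contDiffOn_symm (n := n + 1)
    (by simp) univ_mem (fun z _ => hΨ.contDiffAt) hΨ'
  exact ⟨Φ, fun x y => congrFun hΦ (x, y), hp, hsymm⟩

theorem exists_firstIntegral_of_slope {n : ℕ∞} {m : ℝ × ℝ → ℝ} {p : ℝ × ℝ}
    (hm : ∀ᶠ z in 𝓝 p, ContDiffAt ℝ (n + 1) m z) :
    ∃ u : ℝ × ℝ → ℝ, (∀ᶠ z in 𝓝 p, ContDiffAt ℝ (n + 1) u z ∧ fderiv ℝ u z (1, m z) = 0) ∧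
      fderiv ℝ u p (0, 1) = 1 := by
  obtain ⟨v, hv, hsupp, hvm⟩ := exists_contDiff_hasCompactSupport_eventuallyEq (n := n + 1) hm
  obtain ⟨Y, hY, hYn⟩ := exists_isFlowFrom_contDiff (v := Function.curry v) hv hsupp p.1
  obtain ⟨Φ, hΦ, hp, hsymm⟩ := hY.exists_chart hYn
  have hΦp : Φ p = p := by simp [hΦ, hY.initial]
  let u : ℝ × ℝ → ℝ := fun w => (Φ.symm w).2
  have hu : ∀ z ∈ Φ.source, ContDiffAt ℝ (n + 1) u (Φ z) := fun z hz =>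
    contDiffAt_snd.comp _ (hsymm.contDiffAt (Φ.open_target.mem_nhds (Φ.map_source hz)))
  have hu_diff : ∀ z ∈ Φ.source, DifferentiableAt ℝ u (Φ z) := fun z hz =>
    (hu z hz).differentiableAt (by simp)
  have huΦ : ∀ z ∈ Φ.source, ∀ᶠ z' in 𝓝 z, u (Φ z') = z'.2 := fun z hz => by
    filter_upwards [Φ.open_source.mem_nhds hz] with z' hz'
    simp [u, Φ.left_inv hz']
  have hkill : ∀ z ∈ Φ.source, fderiv ℝ u (Φ z) (1, v (Φ z)) = 0 := fun ⟨x, y⟩ hz =>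
    fderiv_apply_eq_of_hasDerivAt_comp (c := fun t => Φ (t, y)) (hu_diff _ hz)
      (by simpa [hΦ] using (hasDerivAt_id x).prodMk (hY.isIntegralCurve y x))
      ((hasDerivAt_const x y).congr_of_eventuallyEq
        ((Continuous.prodMk_left y).continuousAt.eventually (huΦ _ hz)))
  have hp' : fderiv ℝ u (Φ p) (0, 1) = 1 :=
    fderiv_apply_eq_of_hasDerivAt_comp (c := fun t => Φ (p.1, t)) (hu_diff p hp)
      (by simpa [hΦ, hY.initial] using (hasDerivAt_const p.2 p.1).prodMk (hasDerivAt_id p.2))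
      ((hasDerivAt_id p.2).congr_of_eventuallyEq
        ((Continuous.prodMk_right p.1).continuousAt.eventually (huΦ p hp)))
  refine ⟨u, ?_, by rwa [hΦp] at hp'⟩
  filter_upwards [hvm, Φ.open_target.mem_nhds (hΦp ▸ Φ.map_source hp)] with w hvw hw
  rw [← hvw, ← Φ.right_inv hw]
  exact ⟨hu _ (Φ.map_target hw), hkill _ (Φ.map_target hw)⟩

theorem exists_firstIntegral_of_fst_ne_zero {n : ℕ∞} {X : ℝ × ℝ → ℝ × ℝ} {p : ℝ × ℝ}
    (hX : ∀ᶠ z in 𝓝 p, ContDiffAt ℝ (n + 1) X z) (hXp : (X p).1 ≠ 0) :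
    ∃ u : ℝ × ℝ → ℝ, (∀ᶠ z in 𝓝 p, ContDiffAt ℝ (n + 1) u z ∧ fderiv ℝ u z (X z) = 0) ∧
      fderiv ℝ u p (0, 1) = 1 := by
  have hX₁ : ∀ᶠ z in 𝓝 p, (X z).1 ≠ 0 := hX.self_of_nhds.continuousAt.fst.eventually_ne hXp
  obtain ⟨u, hu, hup⟩ := exists_firstIntegral_of_slope (n := n) (m := fun z => (X z).2 / (X z).1)
    (by filter_upwards [hX, hX₁] with z hz hz₁ using hz.snd.div hz.fst hz₁)
  refine ⟨u, ?_, hup⟩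
  filter_upwards [hu, hX₁] with z ⟨hz, hkill⟩ hz₁
  have hXz : X z = (X z).1 • (1, (X z).2 / (X z).1) := by ext <;> simp [mul_div_cancel₀, hz₁]
  rw [hXz, map_smul, hkill, smul_zero]
  exact ⟨hz, rfl⟩

end FirstIntegral

section Plane

variable {E : Type*} [NormedAddCommGroup E] [NormedSpace ℝ E] {n : ℕ∞} {p : E}

theorem exists_continuousLinearEquiv_prod_apply_eq (hE : Module.finrank ℝ E = 2) {x : E}
    (hx : x ≠ 0) : ∃ e : (ℝ × ℝ) ≃L[ℝ] E, e (1, 0) = x := by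
  have : FiniteDimensional ℝ E := Module.finite_of_finrank_eq_succ hE
  let e₀ : (ℝ × ℝ) ≃L[ℝ] E := ContinuousLinearEquiv.ofFinrankEq (by simp [hE])
  obtain ⟨e₁, he₁⟩ := SeparatingDual.exists_continuousLinearEquiv_apply_eq (R := ℝ)
    (e₀.map_ne_zero_iff.2 (by simp : ((1 : ℝ), (0 : ℝ)) ≠ 0)) hx
  exact ⟨e₀.trans e₁, he₁⟩

theorem exists_firstIntegral (hE : Module.finrank ℝ E = 2) {X : E → E}
    (hX : ∀ᶠ z in 𝓝 p, ContDiffAt ℝ (n + 1) X z) (hXp : X p ≠ 0) {ℓ : E →L[ℝ] ℝ}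
    (hℓ : ℓ (X p) = 0) :
    ∃ u : E → ℝ, (∀ᶠ z in 𝓝 p, ContDiffAt ℝ (n + 1) u z ∧ fderiv ℝ u z (X z) = 0) ∧
      fderiv ℝ u p = ℓ := by
  obtain ⟨e, he⟩ := exists_continuousLinearEquiv_prod_apply_eq hE hXp
  obtain ⟨q, rfl⟩ := e.surjective p
  have hXq : e.symm (X (e q)) = (1, 0) := by simp [← he]
  have hX' : ∀ᶠ z in 𝓝 q, ContDiffAt ℝ (n + 1) (fun z => e.symm (X (e z))) z := by
    filter_upwards [e.continuous.continuousAt.eventually hX] with z hz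
    exact e.symm.contDiff.contDiffAt.comp z (hz.comp z e.contDiff.contDiffAt)
  obtain ⟨u, hu, huq⟩ := exists_firstIntegral_of_fst_ne_zero (n := n) hX' (by simp [hXq])
  have hderiv : ∀ z, ContDiffAt ℝ (n + 1) u (e.symm z) →
      HasFDerivAt (fun z => ℓ (e (0, 1)) * u (e.symm z))
        (ℓ (e (0, 1)) • (fderiv ℝ u (e.symm z)).comp (e.symm : E →L[ℝ] ℝ × ℝ)) z := fun z hz =>
    ((hz.differentiableAt (by simp)).hasFDerivAt.comp z e.symm.hasFDerivAt).const_mul _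
  refine ⟨fun z => ℓ (e (0, 1)) * u (e.symm z), ?_, ?_⟩
  · have hsymm : Tendsto e.symm (𝓝 (e q)) (𝓝 q) := by
      simpa using e.symm.continuous.tendsto (e q)
    filter_upwards [hsymm.eventually hu] with z ⟨hz, hkill⟩
    refine ⟨contDiffAt_const.mul (hz.comp z e.symm.contDiff.contDiffAt), ?_⟩
    rw [e.apply_symm_apply] at hkill
    simp [(hderiv z hz).fderiv, hkill]
  · have huq₀ : fderiv ℝ u q (1, 0) = 0 := by simpa only [hXq] using hu.self_of_nhds.2
    rw [(hderiv (e q) (by simpa using hu.self_of_nhds.1)).fderiv]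
    ext z
    obtain ⟨⟨a, b⟩, rfl⟩ := e.surjective z
    have hab : (a, b) = a • ((1, 0) : ℝ × ℝ) + b • (0, 1) := by simp
    rw [hab]
    simp only [map_add, map_smul]
    simp [he.symm ▸ hℓ, huq, huq₀, mul_comm]

theorem exists_continuousLinearEquiv_apply_eq_single {ι : Type*} [Fintype ι] [DecidableEq ι]
    [Nonempty ι] [FiniteDimensional ℝ E] {v : ι → E} (hv : LinearIndependent ℝ v)
    (hcard : Fintype.card ι = Module.finrank ℝ E) :
    ∃ e : E ≃L[ℝ] (ι → ℝ), ∀ i, e (v i) = Pi.single i 1 := by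
  let b := basisOfLinearIndependentOfCardEqFinrank hv hcard
  have hb : ∀ i, b i = v i := by simp [b]
  exact ⟨b.equivFunL, fun i => by ext j; simp [← hb, Finsupp.single_eq_pi_single]⟩

theorem exists_chart_fderiv_apply_eq_smul_single (hE : Module.finrank ℝ E = 2)
    {X : Fin 2 → E → E} (hX : ∀ i, ∀ᶠ z in 𝓝 p, ContDiffAt ℝ (n + 1) (X i) z)
    (hli : LinearIndependent ℝ fun i => X i p) :
    ∃ Φ : OpenPartialHomeomorph E (Fin 2 → ℝ), p ∈ Φ.source ∧
      (∀ z ∈ Φ.source, ContDiffAt ℝ (n + 1) Φ z) ∧ ContDiffOn ℝ (n + 1) Φ.symm Φ.target ∧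
      (∀ i, fderiv ℝ Φ p (X i p) = Pi.single i 1) ∧
      ∀ z ∈ Φ.source, ∀ i, X i z ≠ 0 ∧ ∃ c : ℝ, fderiv ℝ Φ z (X i z) = c • Pi.single i 1 := by
  have : FiniteDimensional ℝ E := Module.finite_of_finrank_eq_succ hE
  obtain ⟨f', hf'⟩ := exists_continuousLinearEquiv_apply_eq_single hli (by simp [hE])
  choose u hu hup using fun i => exists_firstIntegral (n := n) hE (hX (i + 1)) (hli.ne_zero _)
    (ℓ := (ContinuousLinearMap.proj i).comp (f' : E →L[ℝ] Fin 2 → ℝ)) (by simp [hf'])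
  let f : E → Fin 2 → ℝ := fun z i => u i z
  have hf : ∀ z, (∀ i, ContDiffAt ℝ (n + 1) (u i) z) →
      HasFDerivAt f (ContinuousLinearMap.pi fun i => fderiv ℝ (u i) z) z := fun z hz =>
    hasFDerivAt_pi.2 fun i => ((hz i).differentiableAt (by simp)).hasFDerivAt
  have hfp : HasFDerivAt f (f' : E →L[ℝ] Fin 2 → ℝ) p :=
    (hf p fun i => (hu i).self_of_nhds.1).congr_fderiv <| by
      ext x i
      simp [hup]
  have hs : ∀ᶠ z in 𝓝 p, ∀ i,
      (ContDiffAt ℝ (n + 1) (u i) z ∧ fderiv ℝ (u i) z (X (i + 1) z) = 0) ∧ X i z ≠ 0 :=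
    eventually_all.2 fun i =>
      (hu i).and ((hX i).self_of_nhds.continuousAt.eventually_ne (hli.ne_zero i))
  obtain ⟨Φ, hΦ, hp, hsource, hsymm⟩ := exists_openPartialHomeomorph_contDiffOn_symm (n := n + 1)
    (by simp) hs (fun z hz => contDiffAt_pi.2 fun i => (hz i).1.1) hfp
  refine ⟨Φ, hp, fun z hz => hΦ ▸ contDiffAt_pi.2 fun i => (hsource hz i).1.1, hsymm,
    fun i => ?_, fun z hz i => ⟨(hsource hz i).2, fderiv ℝ (u i) z (X i z), ?_⟩⟩
  · rw [hΦ, hfp.fderiv]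
    exact hf' i
  · rw [hΦ, (hf z fun j => (hsource hz j).1.1).fderiv]
    ext j
    rcases eq_or_ne j i with rfl | hji
    · simp
    · obtain rfl : i = j + 1 := by omega
      simpa [hji] using (hsource hz j).1.2

theorem fderiv_symm_apply_fderiv {𝕜 E F : Type*} [NontriviallyNormedField 𝕜]
    [NormedAddCommGroup E] [NormedSpace 𝕜 E] [NormedAddCommGroup F] [NormedSpace 𝕜 F]
    (Φ : OpenPartialHomeomorph E F) {z : E} (hz : z ∈ Φ.source) (hΦ : DifferentiableAt 𝕜 Φ z)
    (hsymm : DifferentiableAt 𝕜 Φ.symm (Φ z)) (x : E) :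
    fderiv 𝕜 Φ.symm (Φ z) (fderiv 𝕜 Φ z x) = x := by
  have hcomp : HasFDerivAt (Φ.symm ∘ Φ) (.id 𝕜 E) z :=
    (hasFDerivAt_id z).congr_of_eventuallyEq (Φ.eventually_left_inverse hz)
  exact DFunLike.congr_fun ((hsymm.hasFDerivAt.comp z hΦ.hasFDerivAt).unique hcomp) x

theorem exists_chart_fderiv_symm_single_eq_smul (hE : Module.finrank ℝ E = 2) {X : Fin 2 → E → E}
    (hX : ∀ i, ∀ᶠ z in 𝓝 p, ContDiffAt ℝ (n + 1) (X i) z)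
    (hli : LinearIndependent ℝ fun i => X i p) :
    ∃ Φ : OpenPartialHomeomorph E (Fin 2 → ℝ), p ∈ Φ.source ∧
      ContDiffOn ℝ (n + 1) Φ.symm Φ.target ∧
      (∀ i, fderiv ℝ Φ.symm (Φ p) (Pi.single i 1) = X i p) ∧
      ∀ w ∈ Φ.target, ∀ i, ∃ c : ℝ,
        fderiv ℝ Φ.symm w (Pi.single i 1) = c • X i (Φ.symm w) := by
  obtain ⟨Φ, hp, hΦ, hsymm, hframe, hsmul⟩ := exists_chart_fderiv_apply_eq_smul_single hE hX hli
  have hinv : ∀ z ∈ Φ.source, ∀ x, fderiv ℝ Φ.symm (Φ z) (fderiv ℝ Φ z x) = x := fun z hz =>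
    fderiv_symm_apply_fderiv Φ hz ((hΦ z hz).differentiableAt (by simp))
      ((hsymm.contDiffAt (Φ.open_target.mem_nhds (Φ.map_source hz))).differentiableAt (by simp))
  refine ⟨Φ, hp, hsymm, fun i => by rw [← hframe i, hinv p hp], fun w hw i => ?_⟩
  obtain ⟨hX₀, c, hc⟩ := hsmul _ (Φ.map_target hw) i
  have hcX : c • fderiv ℝ Φ.symm w (Pi.single i 1) = X i (Φ.symm w) := by
    simpa [hc, Φ.right_inv hw] using hinv _ (Φ.map_target hw) (X i (Φ.symm w))
  have hc₀ : c ≠ 0 := by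
    rintro rfl
    exact hX₀ (by simpa using hcX.symm)
  exact ⟨c⁻¹, by rw [← hcX, inv_smul_smul₀ hc₀]⟩

end Plane

section NullFrame

/-- Vectors spanning the two null directions of the symmetric 2×2 matrix `A`, where `σ` is a sign
and `ρ` a square root of `-A.det`. They become dependent where `σ * A 0 1 + ρ` vanishes; the choice
of `σ` serves to avoid this. -/
def nullFrame {R : Type*} [CommRing R] (A : Matrix (Fin 2) (Fin 2) R) (σ ρ : R) :
    Fin 2 → Fin 2 → R :=
  ![![-(σ * A 0 1 + ρ), σ * A 0 0], ![-A 1 1, σ * (σ * A 0 1 + ρ)]]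

variable {R : Type*} [CommRing R]

theorem nullFrame_dotProduct_mulVec_self {A : Matrix (Fin 2) (Fin 2) R} (hA : A.IsSymm) {σ ρ : R}
    (hσ : σ ^ 2 = 1) (hρ : ρ ^ 2 = -A.det) (i : Fin 2) :
    nullFrame A σ ρ i ⬝ᵥ A *ᵥ nullFrame A σ ρ i = 0 := by
  rw [det_fin_two, hA.apply 0 1] at hρ
  revert i
  simp only [Fin.forall_fin_two, dotProduct, mulVec, Fin.sum_univ_two, hA.apply 0 1, nullFrame,
    cons_val_zero, cons_val_one]
  constructor <;> grind

theorem nullFrame_zero_dotProduct_mulVec_one {A : Matrix (Fin 2) (Fin 2) R} (hA : A.IsSymm)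
    {σ ρ : R} (hσ : σ ^ 2 = 1) (hρ : ρ ^ 2 = -A.det) :
    nullFrame A σ ρ 0 ⬝ᵥ A *ᵥ nullFrame A σ ρ 1 = 2 * A.det * (σ * A 0 1 + ρ) := by
  rw [det_fin_two, hA.apply 0 1] at hρ ⊢
  simp only [dotProduct, mulVec, Fin.sum_univ_two, hA.apply 0 1, nullFrame, cons_val_zero,
    cons_val_one]
  grind

theorem contDiffOn_nullFrame {𝕜 E : Type*} [NontriviallyNormedField 𝕜] [NormedAddCommGroup E]
    [NormedSpace 𝕜 E] {n : WithTop ℕ∞} {g : E → Matrix (Fin 2) (Fin 2) 𝕜} {ρ : E → 𝕜} {U : Set E}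
    (hg : ∀ i j, ContDiffOn 𝕜 n (fun z => g z i j) U) (hρ : ContDiffOn 𝕜 n ρ U) (σ : 𝕜)
    (i : Fin 2) : ContDiffOn 𝕜 n (fun z => nullFrame (g z) σ (ρ z) i) U := by
  have hτ : ContDiffOn 𝕜 n (fun z => σ * g z 0 1 + ρ z) U :=
    (contDiffOn_const.mul (hg 0 1)).add hρ
  refine contDiffOn_pi.2 fun j => ?_
  fin_cases i <;> fin_cases j
  · exact hτ.neg
  · exact contDiffOn_const.mul (hg 0 0)
  · exact (hg 1 1).neg
  · exact contDiffOn_const.mul hτ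

theorem exists_nullFrame_field {E : Type*} [NormedAddCommGroup E] [NormedSpace ℝ E]
    {n : WithTop ℕ∞} {g : E → Matrix (Fin 2) (Fin 2) ℝ} {U : Set E}
    (hg : ∀ i j, ContDiffOn ℝ n (fun z => g z i j) U) (hsym : ∀ z ∈ U, (g z).IsSymm)
    (hdet : ∀ z ∈ U, (g z).det < 0) {p : E} (hp : p ∈ U) :
    ∃ X : Fin 2 → E → Fin 2 → ℝ, (∀ i, ContDiffOn ℝ n (X i) U) ∧
      (∀ z ∈ U, ∀ i, X i z ⬝ᵥ g z *ᵥ X i z = 0) ∧ X 0 p ⬝ᵥ g p *ᵥ X 1 p < 0 := by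
  obtain ⟨σ, hσ, hσp⟩ : ∃ σ : ℝ, σ ^ 2 = 1 ∧ 0 ≤ σ * g p 0 1 := by
    rcases le_total 0 (g p 0 1) with h | h
    · exact ⟨1, by norm_num, by simpa using h⟩
    · exact ⟨-1, by norm_num, by simpa using h⟩
  have hρ : ∀ z ∈ U, √(-(g z).det) ^ 2 = -(g z).det := fun z hz =>
    Real.sq_sqrt (neg_nonneg.2 (hdet z hz).le)
  have hdet_contDiff : ContDiffOn ℝ n (fun z => (g z).det) U := by
    simp only [det_fin_two]
    exact ((hg 0 0).mul (hg 1 1)).sub ((hg 0 1).mul (hg 1 0))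
  refine ⟨fun i z => nullFrame (g z) σ √(-(g z).det) i,
    contDiffOn_nullFrame hg (hdet_contDiff.neg.sqrt fun z hz => (neg_pos.2 (hdet z hz)).ne') σ,
    fun z hz => nullFrame_dotProduct_mulVec_self (hsym z hz) hσ (hρ z hz), ?_⟩
  rw [nullFrame_zero_dotProduct_mulVec_one (hsym p hp) hσ (hρ p hp)]
  have hρ_pos : 0 < √(-(g p).det) := Real.sqrt_pos.2 (neg_pos.2 (hdet p hp))
  exact mul_neg_of_neg_of_pos (by linarith [hdet p hp]) (by linarith)

theorem linearIndependent_of_dotProduct_mulVec_self_eq_zero [IsDomain R] {ι : Type*} [Fintype ι]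
    {A : Matrix ι ι R} {x : Fin 2 → ι → R} (hx : ∀ i, x i ⬝ᵥ A *ᵥ x i = 0)
    (hx₀₁ : x 0 ⬝ᵥ A *ᵥ x 1 ≠ 0) : LinearIndependent R x := by
  refine Fintype.linearIndependent_iff.2 fun c hc => Fin.forall_fin_two.2 ⟨?_, ?_⟩
  · simpa [hx, hx₀₁, Fin.sum_univ_two] using congrArg (· ⬝ᵥ A *ᵥ x 1) hc
  · simpa [hx, hx₀₁, Fin.sum_univ_two, mulVec_add, mulVec_smul] using congrArg (x 0 ⬝ᵥ A *ᵥ ·) hc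

end NullFrame

section Pullback

/-- The pullback under `φ` of the field of bilinear forms on `ℝ²` with Gram matrices `g`. -/
noncomputable def pullbackForm (φ : (Fin 2 → ℝ) → Fin 2 → ℝ)
    (g : (Fin 2 → ℝ) → Matrix (Fin 2) (Fin 2) ℝ) (w : Fin 2 → ℝ) : Matrix (Fin 2) (Fin 2) ℝ :=
  (Dmat φ w)ᵀ * g (φ w) * Dmat φ w

variable {φ : (Fin 2 → ℝ) → Fin 2 → ℝ} {g : (Fin 2 → ℝ) → Matrix (Fin 2) (Fin 2) ℝ}
  {w : Fin 2 → ℝ}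

theorem pullbackForm_apply (i j : Fin 2) :
    pullbackForm φ g w i j =
      fderiv ℝ φ w (Pi.single i 1) ⬝ᵥ g (φ w) *ᵥ fderiv ℝ φ w (Pi.single j 1) := by
  rw [pullbackForm, Matrix.mul_assoc]
  rfl

theorem isSymm_pullbackForm (hg : (g (φ w)).IsSymm) : (pullbackForm φ g w).IsSymm := by
  simp [pullbackForm, Matrix.IsSymm, transpose_mul, Matrix.mul_assoc, hg.eq]

theorem det_pullbackForm : (pullbackForm φ g w).det = (Dmat φ w).det ^ 2 * (g (φ w)).det := by
  simp only [pullbackForm, det_mul, det_transpose]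
  ring

theorem contDiffOn_pullbackForm {n : WithTop ℕ∞} {U V : Set (Fin 2 → ℝ)} (hV : IsOpen V)
    (hφ : ContDiffOn ℝ (n + 1) φ V) (hφU : MapsTo φ V U)
    (hg : ∀ i j, ContDiffOn ℝ n (fun z => g z i j) U) (i j : Fin 2) :
    ContDiffOn ℝ n (fun w => pullbackForm φ g w i j) V := by
  have hD : ∀ k l, ContDiffOn ℝ n (fun w => Dmat φ w k l) V := fun k l =>
    contDiffOn_pi.1 ((hφ.fderiv_of_isOpen hV le_rfl).clm_apply contDiffOn_const) k
  have hgφ : ∀ k l, ContDiffOn ℝ n (fun w => g (φ w) k l) V := fun k l =>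
    (hg k l).comp (hφ.of_le le_self_add) hφU
  simp only [pullbackForm, Matrix.mul_apply, transpose_apply]
  exact .sum fun l _ => (ContDiffOn.sum fun k _ => (hD k i).mul (hgφ k l)).mul (hD l j)

theorem exists_chart_pullbackForm_diag_eq_zero {n : ℕ∞} {U : Set (Fin 2 → ℝ)} (hU : IsOpen U)
    (hg : ∀ i j, ContDiffOn ℝ (n + 1) (fun z => g z i j) U) (hsym : ∀ z ∈ U, (g z).IsSymm)
    (hdet : ∀ z ∈ U, (g z).det < 0) {p : Fin 2 → ℝ} (hp : p ∈ U) :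
    ∃ Φ : OpenPartialHomeomorph (Fin 2 → ℝ) (Fin 2 → ℝ), p ∈ Φ.source ∧
      ContDiffOn ℝ (n + 1) Φ.symm Φ.target ∧ pullbackForm Φ.symm g (Φ p) 0 1 < 0 ∧
      ∀ w ∈ Φ.target, Φ.symm w ∈ U → ∀ i, pullbackForm Φ.symm g w i i = 0 := by
  obtain ⟨X, hX, hnull, hneg⟩ := exists_nullFrame_field hg hsym hdet hp
  obtain ⟨Φ, hpΦ, hsymm, hframe, hsmul⟩ := exists_chart_fderiv_symm_single_eq_smul (n := n)
    (Module.finrank_fin_fun ℝ)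
    (fun i => eventually_of_mem (hU.mem_nhds hp) fun z hz => (hX i).contDiffAt (hU.mem_nhds hz))
    (linearIndependent_of_dotProduct_mulVec_self_eq_zero (hnull p hp) hneg.ne)
  refine ⟨Φ, hpΦ, hsymm, ?_, fun w hw hwU i => ?_⟩
  · rwa [pullbackForm_apply, hframe, hframe, Φ.left_inv hpΦ]
  · obtain ⟨c, hc⟩ := hsmul w hw i
    rw [pullbackForm_apply, hc, mulVec_smul, smul_dotProduct, dotProduct_smul, hnull _ hwU,
      smul_zero, smul_zero]

end Pullback

theorem exists_null_coordinates_general {n : ℕ∞} {U : Set (Fin 2 → ℝ)} (hU : IsOpen U)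
    {g : (Fin 2 → ℝ) → Matrix (Fin 2) (Fin 2) ℝ}
    (hg : ∀ i j, ContDiffOn ℝ (n + 1) (fun p => g p i j) U) (hsym : ∀ p ∈ U, (g p).IsSymm)
    (hdet : ∀ p ∈ U, (g p).det < 0) {p : Fin 2 → ℝ} (hp : p ∈ U) :
    ∃ (V : Set (Fin 2 → ℝ)) (q : Fin 2 → ℝ) (φ : (Fin 2 → ℝ) → (Fin 2 → ℝ))
      (μ : (Fin 2 → ℝ) → ℝ),
      IsOpen V ∧ q ∈ V ∧ φ q = p ∧ MapsTo φ V U ∧ InjOn φ V ∧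
      ContDiffOn ℝ (n + 1) φ V ∧ ContDiffOn ℝ n μ V ∧
      (∀ w ∈ V, 0 < μ w) ∧ (∀ w ∈ V, (Dmat φ w).det ≠ 0) ∧
      ∀ w ∈ V, (Dmat φ w)ᵀ * g (φ w) * Dmat φ w = of ![![0, -μ w], ![-μ w, 0]] := by
  obtain ⟨Φ, hpΦ, hsymm, hneg, hdiag⟩ :=
    exists_chart_pullbackForm_diag_eq_zero hU hg hsym hdet hp
  let W : Set (Fin 2 → ℝ) := Φ.target ∩ Φ.symm ⁻¹' U
  let μ : (Fin 2 → ℝ) → ℝ := fun w => -pullbackForm Φ.symm g w 0 1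
  have hW : IsOpen W := Φ.isOpen_inter_preimage_symm hU
  have hμ : ContDiffOn ℝ n μ W := (contDiffOn_pullbackForm hW (hsymm.mono inter_subset_left)
    (fun w hw => hw.2) (fun i j => (hg i j).of_le le_self_add) 0 1).neg
  have hform : ∀ w ∈ W, pullbackForm Φ.symm g w = of ![![0, -μ w], ![-μ w, 0]] := fun w hw => by
    ext i j
    fin_cases i <;> fin_cases j <;>
      simp [μ, hdiag w hw.1 hw.2, (isSymm_pullbackForm (hsym _ hw.2)).apply 0 1]
  have hW_sub : W ∩ μ ⁻¹' Ioi 0 ⊆ W := inter_subset_left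
  refine ⟨W ∩ μ ⁻¹' Ioi 0, Φ p, Φ.symm, μ, hμ.continuousOn.isOpen_inter_preimage hW isOpen_Ioi,
    ⟨⟨Φ.map_source hpΦ, by simpa [Φ.left_inv hpΦ]⟩, neg_pos.2 hneg⟩, Φ.left_inv hpΦ,
    fun w hw => hw.1.2, Φ.symm.injOn.mono fun w hw => hw.1.1,
    hsymm.mono fun w hw => hw.1.1, hμ.mono hW_sub, fun w hw => hw.2, fun w hw hD => ?_,
    fun w hw => hform w hw.1⟩
  have hμ_pos : 0 < μ w := hw.2
  simpa [hform w hw.1, hD, hμ_pos.ne'] using det_pullbackForm (φ := Φ.symm) (g := g) (w := w)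

/-- Existence of null coordinates on a Lorentzian surface: for a smooth Lorentzian
metric `g` (symmetric with negative determinant) on an open set `U ⊆ ℝ²` and any
`p ∈ U`, there is a smooth injective reparametrization `φ : V → U` with everywhere
invertible derivative, sending some `q ∈ V` to `p`, in which the pulled-back metric
takes the form `[[0, -μ], [-μ, 0]]` with `μ > 0` smooth. -/
theorem exists_null_coordinates
    (U : Set (Fin 2 → ℝ)) (hU : IsOpen U)
    (g : (Fin 2 → ℝ) → Matrix (Fin 2) (Fin 2) ℝ)
    (hg : ∀ i j, ContDiffOn ℝ (⊤ : ℕ∞) (fun p => g p i j) U)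
    (hsym : ∀ p ∈ U, (g p).IsSymm)
    (hdet : ∀ p ∈ U, (g p).det < 0) :
    ∀ p ∈ U, ∃ (V : Set (Fin 2 → ℝ)) (q : Fin 2 → ℝ)
      (φ : (Fin 2 → ℝ) → (Fin 2 → ℝ)) (μ : (Fin 2 → ℝ) → ℝ),
      IsOpen V ∧ q ∈ V ∧ φ q = p ∧ Set.MapsTo φ V U ∧ Set.InjOn φ V ∧
      ContDiffOn ℝ (⊤ : ℕ∞) φ V ∧ ContDiffOn ℝ (⊤ : ℕ∞) μ V ∧
      (∀ w ∈ V, 0 < μ w) ∧ (∀ w ∈ V, (Dmat φ w).det ≠ 0) ∧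
      (∀ w ∈ V, (Dmat φ w).transpose * g (φ w) * Dmat φ w =
        Matrix.of ![![0, -μ w], ![-μ w, 0]]) := by
  exact fun p hp =>
    exists_null_coordinates_general (n := ⊤) hU (by simpa using hg) hsym hdet hp
end

section
/- Laplacian of the Gauss map of a minimal Lorentzian surface (Lemma 3.1, explicit form): in the setting of a minimal Lorentzian surface x(s,t) = α(s) + β(t) in null coordinates, the Gauss map ν = (1/m²)·(α'(s) ∧ β'(t)) satisfies, at every point, (2/m²)·∂²ν/∂s∂t = (2·B(η₁,η₂)/m⁴)·ν + (2/m⁴)·(η₁ ∧ η₂). (This is the identity Δν = 2Kν + 2K^Dμ, where K = B(η₁,η₂)/m⁴ is the Gaussian curvature and K^Dμ = (1/m⁴)·η₁∧η₂ encodes the normal curvature.) -/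
noncomputable section

/-- The Minkowski bilinear form on `ℝ⁴ = Fin 4 → ℝ`:
`B(v,w) = -v₀w₀ + v₁w₁ + v₂w₂ + v₃w₃`. -/
def B4 (v w : Fin 4 → ℝ) : ℝ :=
  -(v 0 * w 0) + v 1 * w 1 + v 2 * w 2 + v 3 * w 3

/-- The wedge product `v ∧ w`, modelled concretely as the antisymmetric array
`(i,j) ↦ vᵢwⱼ - vⱼwᵢ` (a faithful model of the second exterior power `Λ²(ℝ⁴)`). -/
def wedge (v w : Fin 4 → ℝ) : Fin 4 → Fin 4 → ℝ :=
  fun i j => v i * w j - v j * w i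

/-- Partial derivative of a two-parameter map with respect to the first variable. -/
def pds {E : Type*} [NormedAddCommGroup E] [NormedSpace ℝ E]
    (x : ℝ → ℝ → E) (s t : ℝ) : E :=
  deriv (fun u => x u t) s

/-- Partial derivative of a two-parameter map with respect to the second variable. -/
def pdt {E : Type*} [NormedAddCommGroup E] [NormedSpace ℝ E]
    (x : ℝ → ℝ → E) (s t : ℝ) : E :=
  deriv (fun u => x s u) t

/-- `m²(s,t) = -B(α'(s), β'(t))`, the conformal factor of the induced metric
`-m²(ds⊗dt + dt⊗ds)` of the minimal Lorentzian surface `x(s,t) = α(s) + β(t)`. -/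
def msq (α β : ℝ → Fin 4 → ℝ) (s t : ℝ) : ℝ :=
  -B4 (deriv α s) (deriv β t)

/-- `η₁ = h(∂s,∂s)`: the component of `x_{ss} = α''` orthogonal to the tangent
plane `span{α'(s), β'(t)}`. -/
def eta1 (α β : ℝ → Fin 4 → ℝ) (s t : ℝ) : Fin 4 → ℝ :=
  deriv (deriv α) s
    - (B4 (deriv (deriv α) s) (deriv β t) / B4 (deriv α s) (deriv β t)) • deriv α s

/-- `η₂ = h(∂t,∂t)`: the component of `x_{tt} = β''` orthogonal to the tangent
plane `span{α'(s), β'(t)}`. -/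
def eta2 (α β : ℝ → Fin 4 → ℝ) (s t : ℝ) : Fin 4 → ℝ :=
  deriv (deriv β) t
    - (B4 (deriv (deriv β) t) (deriv α s) / B4 (deriv α s) (deriv β t)) • deriv β t

/-- The Gauss map `ν = (1/m²)·(α'(s) ∧ β'(t))`, valued in (a model of) `Λ²(ℝ⁴)`. -/
def gaussMap (α β : ℝ → Fin 4 → ℝ) (s t : ℝ) : Fin 4 → Fin 4 → ℝ :=
  (1 / msq α β s t) • wedge (deriv α s) (deriv β t)

/-- The Laplace–Beltrami operator of the induced metric `-m²(ds⊗dt + dt⊗ds)`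
(with the sign convention of the paper) acting on `Λ²(ℝ⁴)`-valued maps:
`Δξ = (2/m²)·∂²ξ/∂s∂t`. -/
def lap (α β : ℝ → Fin 4 → ℝ) (ξ : ℝ → ℝ → (Fin 4 → Fin 4 → ℝ)) (s t : ℝ) :
    Fin 4 → Fin 4 → ℝ :=
  (2 / msq α β s t) • pds (pdt ξ) s t

/-!
For a functional `L`, the derivative of `a / L a` is `1 / L a` times the component of `a'` in
`ker L` along `a`. Applied to `β' / m²` with `L = B(α', ·)`, this gives `∂ₜν = (1/m²) α' ∧ η₂`.
Applied to `α' / m²` with `L = B(·, β')`, it gives `∂ₛ(α' / m²) = η₁ / m²`, while `η₂` changes only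
in the direction of `β'`, by `∂ₛη₂ = (B(η₁, η₂)/m²) β'`. Hence
`∂ₛ∂ₜν = (1/m²) η₁ ∧ η₂ + (B(η₁, η₂)/m²) ν`.
-/

section KernelProjection

variable {𝕜 E : Type*} [NontriviallyNormedField 𝕜] [NormedAddCommGroup E] [NormedSpace 𝕜 E]

/-- The projection of `w` onto the kernel of the functional `L` along the vector `v`. The vectors
`η₁`, `η₂` are such projections of `α''`, `β''`. Meaningful only for `L v ≠ 0`; otherwise it is
`w`, by division by zero. -/
def projKer (L : E →L[𝕜] 𝕜) (v w : E) : E :=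
  w - (L w / L v) • v

theorem map_projKer {L : E →L[𝕜] 𝕜} {v : E} (hv : L v ≠ 0) (w : E) :
    L (projKer L v w) = 0 := by
  simp [projKer, hv]

theorem hasDerivAt_inv_apply_smul_self (L : E →L[𝕜] 𝕜) {f : 𝕜 → E} {f' : E} {x : 𝕜}
    (hf : HasDerivAt f f' x) (hL : L (f x) ≠ 0) :
    HasDerivAt (fun u => (L (f u))⁻¹ • f u) ((L (f x))⁻¹ • projKer L (f x) f') x := by
  have hLf : HasDerivAt (fun u => L (f u)) (L f') x := L.hasFDerivAt.comp_hasDerivAt x hf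
  refine ((hLf.fun_inv hL).fun_smul hf).congr_deriv ?_
  rw [projKer]
  match_scalars <;> field_simp

theorem hasDerivAt_projKer {L : 𝕜 → E →L[𝕜] 𝕜} {L' : E →L[𝕜] 𝕜} {x : 𝕜} {v : E}
    (hL : HasDerivAt L L' x) (hv : L x v ≠ 0) (w : E) :
    HasDerivAt (fun u => projKer (L u) v w) (-(L' (projKer (L x) v w) / L x v) • v) x := by
  have hLapply (z : E) : HasDerivAt (fun u => L u z) (L' z) x := by
    simpa using hL.clm_apply (hasDerivAt_const x z)
  refine ((((hLapply w).fun_div (hLapply v) hv).smul_const v).const_sub w).congr_deriv ?_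
  simp only [projKer, map_sub, map_smul, smul_eq_mul]
  match_scalars
  field_simp

end KernelProjection

theorem hasDerivAt_deriv_of_contDiffOn {𝕜 E : Type*} [NontriviallyNormedField 𝕜]
    [NormedAddCommGroup E] [NormedSpace 𝕜 E] {f : 𝕜 → E} {I : Set 𝕜} {x : 𝕜}
    (hf : ContDiffOn 𝕜 2 f I) (hI : IsOpen I) (hx : x ∈ I) :
    HasDerivAt (deriv f) (deriv (deriv f) x) x :=
  have hf' : ContDiffOn 𝕜 1 (deriv f) I := hf.deriv_of_isOpen hI (by norm_num)
  ((hf'.differentiableOn one_ne_zero).differentiableAt (hI.mem_nhds hx)).hasDerivAt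

section BilinearQuotient

variable {𝕜 E E' F : Type*} [NontriviallyNormedField 𝕜]
  [NormedAddCommGroup E] [NormedSpace 𝕜 E] [NormedAddCommGroup E'] [NormedSpace 𝕜 E']
  [NormedAddCommGroup F] [NormedSpace 𝕜 F]
  (B : E →L[𝕜] E' →L[𝕜] 𝕜) (W : E →L[𝕜] E' →L[𝕜] F)

theorem apply_projKer_projKer {v : E} {w : E'} (hB : B v w ≠ 0) (v' : E) (w' : E') :
    B (projKer (B.flip w) v v') (projKer (B v) w w') = B v' (projKer (B v) w w') := by
  have horth : B v (projKer (B v) w w') = 0 := map_projKer hB w'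
  rw [projKer, map_sub, map_smul, sub_apply, smul_apply, horth, smul_zero, sub_zero]

theorem hasDerivAt_inv_smul_bilin_right (v : E) {b : 𝕜 → E'} {b' : E'} {t : 𝕜}
    (hb : HasDerivAt b b' t) (hB : B v (b t) ≠ 0) :
    HasDerivAt (fun u => (B v (b u))⁻¹ • W v (b u))
      ((B v (b t))⁻¹ • W v (projKer (B v) (b t) b')) t := by
  simpa only [Function.comp_def, map_smul] using
    (W v).hasFDerivAt.comp_hasDerivAt t (hasDerivAt_inv_apply_smul_self (B v) hb hB)

theorem hasDerivAt_inv_smul_bilin_projKer {a : 𝕜 → E} {a' : E} {s : 𝕜} (w w' : E')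
    (ha : HasDerivAt a a' s) (hB : B (a s) w ≠ 0) :
    HasDerivAt (fun u => (B (a u) w)⁻¹ • W (a u) (projKer (B (a u)) w w'))
      ((B (a s) w)⁻¹ • W (projKer (B.flip w) (a s) a') (projKer (B (a s)) w w')
        - (B (projKer (B.flip w) (a s) a') (projKer (B (a s)) w w') / B (a s) w ^ 2) •
          W (a s) w) s := by
  have hleft : HasDerivAt (fun u => W ((B (a u) w)⁻¹ • a u))
      (W ((B (a s) w)⁻¹ • projKer (B.flip w) (a s) a')) s :=
    W.hasFDerivAt.comp_hasDerivAt s (hasDerivAt_inv_apply_smul_self (B.flip w) ha hB)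
  have hright : HasDerivAt (fun u => projKer (B (a u)) w w')
      (-(B a' (projKer (B (a s)) w w') / B (a s) w) • w) s :=
    hasDerivAt_projKer (B.hasFDerivAt.comp_hasDerivAt s ha) hB w'
  rw [apply_projKer_projKer B hB]
  convert hleft.clm_apply hright using 1
  all_goals simp only [map_smul, smul_apply]
  match_scalars <;> field_simp

theorem deriv_deriv_inv_smul_bilin {a : 𝕜 → E} {b : 𝕜 → E'} {a' : E} {b' : E'} {s t : 𝕜}
    (ha : HasDerivAt a a' s) (hb : HasDerivAt b b' t) (hB : B (a s) (b t) ≠ 0) :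
    deriv (fun u => deriv (fun v => (B (a u) (b v))⁻¹ • W (a u) (b v)) t) s =
      (B (a s) (b t))⁻¹ • W (projKer (B.flip (b t)) (a s) a') (projKer (B (a s)) (b t) b')
        - (B (projKer (B.flip (b t)) (a s) a') (projKer (B (a s)) (b t) b')
          / B (a s) (b t) ^ 2) • W (a s) (b t) := by
  have hne : ∀ᶠ u in nhds s, B (a u) (b t) ≠ 0 :=
    ((B.flip (b t)).continuous.continuousAt.comp ha.continuousAt).eventually_ne hB
  have hpartial : (fun u => deriv (fun v => (B (a u) (b v))⁻¹ • W (a u) (b v)) t) =ᶠ[nhds s]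
      fun u => (B (a u) (b t))⁻¹ • W (a u) (projKer (B (a u)) (b t) b') :=
    hne.mono fun u hu => (hasDerivAt_inv_smul_bilin_right B W (a u) hb hu).deriv
  rw [hpartial.deriv_eq]
  exact (hasDerivAt_inv_smul_bilin_projKer B W (b t) b' ha hB).deriv

/-- Here `a`, `b` are the tangent fields `α'`, `β'`, the conformal factor `m²` is `-B(a, b)`, and
the continuous bilinear map `W` stands for the wedge product. -/
theorem laplacian_gaussMap_minimal_general
    {a : 𝕜 → E} {b : 𝕜 → E'} {a' η₁ : E} {b' η₂ : E'} {s t : 𝕜}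
    (ha : HasDerivAt a a' s) (hb : HasDerivAt b b' t) (hB : B (a s) (b t) ≠ 0)
    (hη₁ : η₁ = projKer (B.flip (b t)) (a s) a') (hη₂ : η₂ = projKer (B (a s)) (b t) b') :
    (2 / -B (a s) (b t)) •
        deriv (fun u => deriv (fun v => (1 / -B (a u) (b v)) • W (a u) (b v)) t) s =
      (2 * B η₁ η₂ / (-B (a s) (b t)) ^ 2) • (1 / -B (a s) (b t)) • W (a s) (b t)
        + (2 / (-B (a s) (b t)) ^ 2) • W η₁ η₂ := by
  simp only [one_div, inv_neg, neg_smul, deriv.fun_neg, deriv_deriv_inv_smul_bilin B W ha hb hB,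
    ← hη₁, ← hη₂]
  match_scalars <;> field_simp

end BilinearQuotient

section Minkowski

theorem B4_comm (v w : Fin 4 → ℝ) : B4 v w = B4 w v := by
  simp only [B4, mul_comm]

theorem isBilinearMap_B4 : IsBilinearMap ℝ B4 where
  add_left _ _ _ := by simp only [B4, Pi.add_apply]; ring
  smul_left _ _ _ := by simp only [B4, Pi.smul_apply, smul_eq_mul]; ring
  add_right _ _ _ := by simp only [B4, Pi.add_apply]; ring
  smul_right _ _ _ := by simp only [B4, Pi.smul_apply, smul_eq_mul]; ring

theorem isBilinearMap_wedge : IsBilinearMap ℝ wedge where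
  add_left _ _ _ := by ext; simp only [wedge, Pi.add_apply]; ring
  smul_left _ _ _ := by ext; simp only [wedge, Pi.smul_apply, smul_eq_mul]; ring
  add_right _ _ _ := by ext; simp only [wedge, Pi.add_apply]; ring
  smul_right _ _ _ := by ext; simp only [wedge, Pi.smul_apply, smul_eq_mul]; ring

theorem eta1_eq_projKer (α β : ℝ → Fin 4 → ℝ) (s t : ℝ) :
    eta1 α β s t = projKer (isBilinearMap_B4.toContinuousBilinearMap.flip (deriv β t))
      (deriv α s) (deriv (deriv α) s) :=
  rfl

theorem eta2_eq_projKer (α β : ℝ → Fin 4 → ℝ) (s t : ℝ) :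
    eta2 α β s t = projKer (isBilinearMap_B4.toContinuousBilinearMap (deriv α s))
      (deriv β t) (deriv (deriv β) t) := by
  rw [eta2, B4_comm (deriv (deriv β) t)]
  rfl

end Minkowski

/-- Lemma 3.1 (explicit form): for a minimal Lorentzian surface `x = α(s)+β(t)` in
null coordinates, the Gauss map satisfies
`Δν = (2/m²)·∂²ν/∂s∂t = (2·B(η₁,η₂)/m⁴)·ν + (2/m⁴)·(η₁ ∧ η₂)`,
i.e. `Δν = 2Kν + 2K^Dμ`. -/
theorem laplacian_gaussMap_minimal
    (I₁ I₂ : Set ℝ) (hI₁ : IsOpen I₁) (hI₂ : IsOpen I₂)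
    (hI₁' : I₁.OrdConnected) (hI₂' : I₂.OrdConnected)
    (α β : ℝ → Fin 4 → ℝ)
    (hα : ContDiffOn ℝ (⊤ : ℕ∞) α I₁) (hβ : ContDiffOn ℝ (⊤ : ℕ∞) β I₂)
    (hαnull : ∀ s ∈ I₁, B4 (deriv α s) (deriv α s) = 0)
    (hβnull : ∀ t ∈ I₂, B4 (deriv β t) (deriv β t) = 0)
    (hneg : ∀ s ∈ I₁, ∀ t ∈ I₂, B4 (deriv α s) (deriv β t) < 0)
    :
    ∀ s ∈ I₁, ∀ t ∈ I₂,
      (2 / msq α β s t) • pds (pdt (gaussMap α β)) s t =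
        (2 * B4 (eta1 α β s t) (eta2 α β s t) / (msq α β s t) ^ 2) • gaussMap α β s t
          + (2 / (msq α β s t) ^ 2) • wedge (eta1 α β s t) (eta2 α β s t) := by
  intro s hs t ht
  exact laplacian_gaussMap_minimal_general isBilinearMap_B4.toContinuousBilinearMap
    isBilinearMap_wedge.toContinuousBilinearMap
    (hasDerivAt_deriv_of_contDiffOn (hα.of_le (by norm_cast)) hI₁ hs)
    (hasDerivAt_deriv_of_contDiffOn (hβ.of_le (by norm_cast)) hI₂ ht)
    (hneg s hs t ht).ne (eta1_eq_projKer α β s t) (eta2_eq_projKer α β s t)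
end
end

section
/- Surfaces of the form x(s,t) = s·η₀ + β(t) (Proposition 3.4, converse direction, and Theorem 3.6 (vi)⟹(iii)): let η₀ ∈ ℝ⁴ with η₀ ≠ 0 and B(η₀,η₀) = 0, and let β : I → ℝ⁴ be a smooth curve on an open interval I with B(β'(t),β'(t)) = 0 and B(η₀, β'(t)) < 0 for all t ∈ I. Define x : ℝ × I → ℝ⁴ by x(s,t) := s·η₀ + β(t) and m²(t) := −B(η₀,β'(t)) > 0. Then: (1) x satisfies the null-coordinate conditions B(x_s,x_s) = 0, B(x_t,x_t) = 0, B(x_s,x_t) < 0 (so x parametrizes a Lorentzian surface in 𝔼⁴₁); (2) x_{ss} ≡ 0 and x_{st} ≡ 0, so x is minimal and the second fundamental form annihilates the light-like tangent direction η₀ (the relative null space contains the B-degenerate line ℝ·η₀ of the tangent plane); (3) the Gauss map ν := (1/m²)·(x_s ∧ x_t) = (1/m²(t))·(η₀ ∧ β'(t)) satisfies ∂²ν/∂s∂t ≡ 0, i.e. the Gauss map is harmonic, Δν = 0. -/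
noncomputable section

/-- The surface `x(s,t) = s·η₀ + β(t)`. -/
def xfun (η₀ : Fin 4 → ℝ) (β : ℝ → Fin 4 → ℝ) (s t : ℝ) : Fin 4 → ℝ :=
  s • η₀ + β t

/-- The Gauss map `ν = (1/m²)·(x_s ∧ x_t)` of the surface `x`, where
`m² = -B(x_s, x_t)`. -/
def nuOf (x : ℝ → ℝ → (Fin 4 → ℝ)) (s t : ℝ) : Fin 4 → Fin 4 → ℝ :=
  (1 / (-B4 (pds x s t) (pdt x s t))) • wedge (pds x s t) (pdt x s t)

/-!
Both first partial derivatives of `x(s,t) = s·η₀ + β(t)`, namely `x_s = η₀` and `x_t = β'(t)`, are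
independent of `s`. Hence so is every quantity built from them pointwise, in particular the Gauss
map `ν`, and its mixed derivative `∂²ν/∂s∂t` vanishes because `s` no longer occurs.
-/

theorem pds_const {E : Type*} [NormedAddCommGroup E] [NormedSpace ℝ E] (f : ℝ → E) :
    pds (fun _ => f) = 0 := by
  funext s t
  exact deriv_const s (f t)

section Differentiability

variable {E : Type*} [NormedAddCommGroup E] [NormedSpace ℝ E]
  {v w : E → Fin 4 → ℝ} {p : E}

@[fun_prop]
theorem differentiableAt_B4 (hv : DifferentiableAt ℝ v p) (hw : DifferentiableAt ℝ w p) :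
    DifferentiableAt ℝ (fun q => B4 (v q) (w q)) p := by
  unfold B4
  fun_prop

@[fun_prop]
theorem differentiableAt_wedge (hv : DifferentiableAt ℝ v p) (hw : DifferentiableAt ℝ w p) :
    DifferentiableAt ℝ (fun q => wedge (v q) (w q)) p := by
  unfold wedge
  fun_prop

end Differentiability

section TranslationSurface

variable (η₀ : Fin 4 → ℝ) (β : ℝ → Fin 4 → ℝ)

theorem pds_xfun : pds (xfun η₀ β) = fun _ _ => η₀ := by
  funext s t
  have h : HasDerivAt (fun u : ℝ => u • η₀ + β t) ((1 : ℝ) • η₀) s :=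
    ((hasDerivAt_id s).smul_const η₀).add_const (β t)
  exact h.deriv.trans (one_smul ℝ η₀)

theorem pdt_xfun : pdt (xfun η₀ β) = fun _ t => deriv β t := by
  funext s t
  exact deriv_const_add (s • η₀)

theorem pds_pds_xfun : pds (pds (xfun η₀ β)) = 0 := by
  rw [pds_xfun, pds_const]

theorem pds_pdt_xfun : pds (pdt (xfun η₀ β)) = 0 := by
  rw [pdt_xfun, pds_const]

theorem nuOf_xfun :
    nuOf (xfun η₀ β) = fun _ t => (1 / (-B4 η₀ (deriv β t))) • wedge η₀ (deriv β t) := by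
  funext s t
  simp only [nuOf, pds_xfun, pdt_xfun]

theorem pds_pdt_nuOf_xfun : pds (pdt (nuOf (xfun η₀ β))) = 0 := by
  rw [nuOf_xfun]
  exact pds_const (deriv _)

variable {η₀ β}

theorem differentiableAt_nuOf_xfun {t : ℝ} (hβ : DifferentiableAt ℝ (deriv β) t)
    (hβne : B4 η₀ (deriv β t) ≠ 0) (s : ℝ) :
    DifferentiableAt ℝ (nuOf (xfun η₀ β) s) t := by
  have hm : -B4 η₀ (deriv β t) ≠ 0 := neg_ne_zero.mpr hβne
  rw [nuOf_xfun]
  fun_prop (disch := exact hm)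

end TranslationSurface

/-- Differentiability of `ν` in `t` is part of the conclusion because without it `pdt ν` would be
the junk value `0`. -/
theorem translation_surface_of_null_line_harmonic_gaussMap_general
    {η₀ : Fin 4 → ℝ} (hη₀null : B4 η₀ η₀ = 0) {β : ℝ → Fin 4 → ℝ} {t : ℝ}
    (hβ : DifferentiableAt ℝ (deriv β) t) (hβnull : B4 (deriv β t) (deriv β t) = 0)
    (hβneg : B4 η₀ (deriv β t) < 0) (s : ℝ) :
    (B4 (pds (xfun η₀ β) s t) (pds (xfun η₀ β) s t) = 0 ∧
      B4 (pdt (xfun η₀ β) s t) (pdt (xfun η₀ β) s t) = 0 ∧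
      B4 (pds (xfun η₀ β) s t) (pdt (xfun η₀ β) s t) < 0) ∧
    (pds (pds (xfun η₀ β)) s t = 0 ∧ pds (pdt (xfun η₀ β)) s t = 0) ∧
    (nuOf (xfun η₀ β) s t = (1 / (-B4 η₀ (deriv β t))) • wedge η₀ (deriv β t) ∧
      pds (pdt (nuOf (xfun η₀ β))) s t = 0 ∧
      (2 / (-B4 (pds (xfun η₀ β) s t) (pdt (xfun η₀ β) s t))) •
        pds (pdt (nuOf (xfun η₀ β))) s t = 0) ∧
    DifferentiableAt ℝ (nuOf (xfun η₀ β) s) t := by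
  have nu_st : pds (pdt (nuOf (xfun η₀ β))) s t = 0 :=
    congrFun₂ (pds_pdt_nuOf_xfun η₀ β) s t
  refine ⟨?nullCoordinates, ?minimal, ⟨?gaussMap, nu_st, ?laplacian⟩,
    differentiableAt_nuOf_xfun hβ hβneg.ne s⟩
  case nullCoordinates =>
    rw [pds_xfun, pdt_xfun]
    exact ⟨hη₀null, hβnull, hβneg⟩
  case minimal =>
    rw [pds_pds_xfun, pds_pdt_xfun]
    exact ⟨rfl, rfl⟩
  case gaussMap => rw [nuOf_xfun]
  case laplacian => rw [nu_st, smul_zero]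

/-- Proposition 3.4 (converse direction) and Theorem 3.6 (vi)⟹(iii): for a nonzero
light-like vector `η₀` and a null curve `β` with `B(η₀,β'(t)) < 0`, the surface
`x(s,t) = s·η₀ + β(t)` is Lorentzian in null coordinates, minimal with
`x_{ss} ≡ x_{st} ≡ 0` (degenerate relative null direction `η₀`), and its Gauss map
`ν = (1/m²(t))·(η₀ ∧ β'(t))` is harmonic: `∂²ν/∂s∂t ≡ 0`, i.e. `Δν = 0`. -/
theorem translation_surface_of_null_line_harmonic_gaussMap
    (η₀ : Fin 4 → ℝ) (hη₀ : η₀ ≠ 0) (hη₀null : B4 η₀ η₀ = 0)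
    (I : Set ℝ) (hI : IsOpen I) (hI' : I.OrdConnected)
    (β : ℝ → Fin 4 → ℝ) (hβ : ContDiffOn ℝ (⊤ : ℕ∞) β I)
    (hβnull : ∀ t ∈ I, B4 (deriv β t) (deriv β t) = 0)
    (hβneg : ∀ t ∈ I, B4 η₀ (deriv β t) < 0) :
    (∀ s : ℝ, ∀ t ∈ I,
      B4 (pds (xfun η₀ β) s t) (pds (xfun η₀ β) s t) = 0 ∧
      B4 (pdt (xfun η₀ β) s t) (pdt (xfun η₀ β) s t) = 0 ∧
      B4 (pds (xfun η₀ β) s t) (pdt (xfun η₀ β) s t) < 0) ∧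
    (∀ s : ℝ, ∀ t ∈ I,
      pds (pds (xfun η₀ β)) s t = 0 ∧ pds (pdt (xfun η₀ β)) s t = 0) ∧
    (∀ s : ℝ, ∀ t ∈ I,
      nuOf (xfun η₀ β) s t = (1 / (-B4 η₀ (deriv β t))) • wedge η₀ (deriv β t) ∧
      pds (pdt (nuOf (xfun η₀ β))) s t = 0 ∧
      (2 / (-B4 (pds (xfun η₀ β) s t) (pdt (xfun η₀ β) s t))) •
        pds (pdt (nuOf (xfun η₀ β))) s t = 0) := by
  have hβ' : DifferentiableOn ℝ (deriv β) I :=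
    ((contDiffOn_infty_iff_deriv_of_isOpen hI).mp hβ).2.differentiableOn (by simp)
  have surface s t (ht : t ∈ I) := translation_surface_of_null_line_harmonic_gaussMap_general
    hη₀null (hβ'.differentiableAt (hI.mem_nhds ht)) (hβnull t ht) (hβneg t ht) s
  exact ⟨fun s t ht => (surface s t ht).1, fun s t ht => (surface s t ht).2.1,
    fun s t ht => (surface s t ht).2.2.1⟩
end
end
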